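/- arXiv:1909.10445 — 9 statements merged into one kernel-verified Lean document; each statement's English description precedes it below -/
import Mathlib

section
/- Let n be a square-free positive integer and let α = (a + √n·i)/c be an element of Q*(√-n), with b = (a²+n)/c. Then all of the following complex numbers are well defined (the denominators 2b, 2(2a+b+c), 4a+4b+c are nonzero) and: x(α) = (-a + √n·i)/(2b); y(α) = (-(a+c) + √n·i)/(2(2a+b+c)); y²(α) = ((-3a-2b-c) + √n·i)/(4a+4b+c); y³(α) = ((-a-2b) + √n·i)/(2b), where x(z) = -1/(2z) and y(z) = -1/(2(z+1)). -/
open Complex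

/-- The set `Q*(√-n)` of complex numbers `(a + √n·i)/c` with `a, c ∈ ℤ`,
`c` even and nonzero, and `c ∣ a² + n`. -/
def Qstar (n : ℕ) : Set ℂ :=
  {z | ∃ a c : ℤ, c ≠ 0 ∧ 2 ∣ c ∧ c ∣ (a ^ 2 + (n : ℤ)) ∧
    z = ((a : ℂ) + Real.sqrt n * Complex.I) / (c : ℂ)}

/-- The Hecke transformation `x(z) = -1/(2z)`. -/
noncomputable def heckeX (z : ℂ) : ℂ := -1 / (2 * z)

/-- The Hecke transformation `y(z) = -1/(2(z+1))`. -/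
noncomputable def heckeY (z : ℂ) : ℂ := -1 / (2 * (z + 1))

/-- One step of the Hecke group action. -/
noncomputable def heckeStep (z w : ℂ) : Prop := w = heckeX z ∨ w = heckeY z

/-- Two elements lie in the same orbit if they are related by the equivalence
relation on `Q*(√-n)` generated by `z ~ x(z)` and `z ~ y(z)`. -/
def sameOrbit (n : ℕ) (z w : ℂ) : Prop :=
  Relation.EqvGen (fun u v => u ∈ Qstar n ∧ v ∈ Qstar n ∧ heckeStep u v) z w

/-- The quadruplet `Q_α = {α, y(α), y²(α), y³(α)}`. -/
noncomputable def quad (α : ℂ) : Set ℂ :=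
  {α, heckeY α, heckeY (heckeY α), heckeY (heckeY (heckeY α))}

/-- The orbit relation on the subtype `Q*(√-n)`. -/
def orbitRel (n : ℕ) (u v : {z : ℂ // z ∈ Qstar n}) : Prop :=
  sameOrbit n u.1 v.1

/-- `E_i(n)`: the number of positive even integers `C` dividing `i² + n`
with `2(i²+n)/C + C ≤ 3i`. -/
def Efun (i n : ℕ) : ℕ :=
  ((i ^ 2 + n).divisors.filter (fun C => 2 ∣ C ∧ 2 * (i ^ 2 + n) / C + C ≤ 3 * i)).card

/-!
Since `y(z) = x(z + 1)`, every formula comes from `x`, by rationalizing: if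
`c * d = 2 * (a ^ 2 + n)`, then `x` sends `(a + √n * I) / c` to `(-a + √n * I) / d`.
The denominators do not vanish because each is, up to a factor `2`, a factor of some
`r ^ 2 + n > 0`: `b * c = a ^ 2 + n`, `(2 * a + b + c) * c = (a + c) ^ 2 + n` and
`(4 * a + 4 * b + c) * b = (a + 2 * b) ^ 2 + n`.
-/

theorem left_ne_zero_of_mul_eq_sq_add {R : Type*} [Ring R] [LinearOrder R]
    [IsStrictOrderedRing R] {p q r n : R} (hn : 0 < n) (h : p * q = r ^ 2 + n) : p ≠ 0 :=
  left_ne_zero_of_mul (h.trans_ne (add_pos_of_nonneg_of_pos (sq_nonneg r) hn).ne')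

theorem sqrt_mul_I_sq {x : ℝ} (hx : 0 ≤ x) : ((√x : ℂ) * I) ^ 2 = -x := by
  rw [mul_pow, I_sq, mul_neg_one, ← ofReal_pow, Real.sq_sqrt hx]

theorem heckeY_eq_heckeX_add_one (z : ℂ) : heckeY z = heckeX (z + 1) := rfl

theorem heckeX_add_div {a c d s : ℂ} (hc : c ≠ 0) (hd : d ≠ 0)
    (h : c * d = 2 * (a ^ 2 - s ^ 2)) : heckeX ((a + s) / c) = (-a + s) / d := by
  have has : a + s ≠ 0 := by
    intro h0
    refine mul_ne_zero hc hd ?_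
    rw [h, sq_sub_sq, h0, zero_mul, mul_zero]
  rw [heckeX]
  field_simp
  linear_combination -h

theorem heckeY_add_div {a c d s : ℂ} (hc : c ≠ 0) (hd : d ≠ 0)
    (h : c * d = 2 * ((a + c) ^ 2 - s ^ 2)) :
    heckeY ((a + s) / c) = (-(a + c) + s) / d := by
  rw [heckeY_eq_heckeX_add_one, div_add_one hc, add_right_comm]
  exact heckeX_add_div hc hd h

section Orbit

variable {a b c s : ℂ}

theorem heckeX_of_mul_eq_sq_sub_sq (h : b * c = a ^ 2 - s ^ 2) (hb : b ≠ 0) (hc : c ≠ 0) :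
    heckeX ((a + s) / c) = (-a + s) / (2 * b) :=
  heckeX_add_div hc (mul_ne_zero two_ne_zero hb) (by linear_combination 2 * h)

theorem heckeY_of_mul_eq_sq_sub_sq (h : b * c = a ^ 2 - s ^ 2) (hc : c ≠ 0)
    (h₁ : 2 * a + b + c ≠ 0) :
    heckeY ((a + s) / c) = (-(a + c) + s) / (2 * (2 * a + b + c)) :=
  heckeY_add_div hc (mul_ne_zero two_ne_zero h₁) (by linear_combination 2 * h)

theorem heckeY_heckeY_of_mul_eq_sq_sub_sq (h : b * c = a ^ 2 - s ^ 2) (hc : c ≠ 0)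
    (h₁ : 2 * a + b + c ≠ 0) (h₂ : 4 * a + 4 * b + c ≠ 0) :
    heckeY (heckeY ((a + s) / c)) = (-3 * a - 2 * b - c + s) / (4 * a + 4 * b + c) := by
  rw [heckeY_of_mul_eq_sq_sub_sq h hc h₁,
    heckeY_add_div (mul_ne_zero two_ne_zero h₁) h₂ (by linear_combination 2 * h)]
  ring

theorem heckeY_heckeY_heckeY_of_mul_eq_sq_sub_sq (h : b * c = a ^ 2 - s ^ 2) (hb : b ≠ 0)
    (hc : c ≠ 0) (h₁ : 2 * a + b + c ≠ 0) (h₂ : 4 * a + 4 * b + c ≠ 0) :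
    heckeY (heckeY (heckeY ((a + s) / c))) = (-a - 2 * b + s) / (2 * b) := by
  rw [heckeY_heckeY_of_mul_eq_sq_sub_sq h hc h₁ h₂,
    heckeY_add_div h₂ (mul_ne_zero two_ne_zero hb) (by linear_combination 2 * h)]
  ring

end Orbit

theorem stmt1_general {n a b c : ℝ} (hn : 0 < n) (hb : b * c = a ^ 2 + n)
    {α : ℂ} (hα : α = (a + √n * I) / c) :
    b ≠ 0 ∧ 2 * a + b + c ≠ 0 ∧ 4 * a + 4 * b + c ≠ 0 ∧
    heckeX α = (-a + √n * I) / (2 * b) ∧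
    heckeY α = (-(a + c) + √n * I) / (2 * (2 * a + b + c)) ∧
    heckeY (heckeY α) = (-3 * a - 2 * b - c + √n * I) / (4 * a + 4 * b + c) ∧
    heckeY (heckeY (heckeY α)) = (-a - 2 * b + √n * I) / (2 * b) := by
  have hb₀ : b ≠ 0 := left_ne_zero_of_mul_eq_sq_add hn hb
  have hc₀ : c ≠ 0 := left_ne_zero_of_mul_eq_sq_add hn ((mul_comm c b).trans hb)
  have h₁ : 2 * a + b + c ≠ 0 :=
    left_ne_zero_of_mul_eq_sq_add (q := c) (r := a + c) hn (by linear_combination hb)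
  have h₂ : 4 * a + 4 * b + c ≠ 0 :=
    left_ne_zero_of_mul_eq_sq_add (q := b) (r := a + 2 * b) hn (by linear_combination hb)
  have hnorm : (b * c : ℂ) = a ^ 2 - (√n * I) ^ 2 := by
    rw [sqrt_mul_I_sq hn.le, sub_neg_eq_add]
    exact_mod_cast hb
  have hb' : (b : ℂ) ≠ 0 := mod_cast hb₀
  have hc' : (c : ℂ) ≠ 0 := mod_cast hc₀
  have h₁' : (2 * a + b + c : ℂ) ≠ 0 := mod_cast h₁
  have h₂' : (4 * a + 4 * b + c : ℂ) ≠ 0 := mod_cast h₂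
  subst hα
  exact ⟨hb₀, h₁, h₂, heckeX_of_mul_eq_sq_sub_sq hnorm hb' hc',
    heckeY_of_mul_eq_sq_sub_sq hnorm hc' h₁',
    heckeY_heckeY_of_mul_eq_sq_sub_sq hnorm hc' h₁' h₂',
    heckeY_heckeY_heckeY_of_mul_eq_sq_sub_sq hnorm hb' hc' h₁' h₂'⟩

theorem stmt1 (n : ℕ) (hn : 0 < n) (hsf : Squarefree n)
    (a b c : ℤ) (hc : c ≠ 0) (hc2 : (2 : ℤ) ∣ c)
    (hb : b * c = a ^ 2 + (n : ℤ))
    (α : ℂ) (hα : α = ((a : ℂ) + Real.sqrt n * Complex.I) / (c : ℂ)) :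
    b ≠ 0 ∧ 2 * a + b + c ≠ 0 ∧ 4 * a + 4 * b + c ≠ 0 ∧
    heckeX α = ((-a : ℤ) + Real.sqrt n * Complex.I) / ((2 * b : ℤ) : ℂ) ∧
    heckeY α = ((-(a + c) : ℤ) + Real.sqrt n * Complex.I) / ((2 * (2 * a + b + c) : ℤ) : ℂ) ∧
    heckeY (heckeY α) =
      ((-3 * a - 2 * b - c : ℤ) + Real.sqrt n * Complex.I) / ((4 * a + 4 * b + c : ℤ) : ℂ) ∧
    heckeY (heckeY (heckeY α)) =
      ((-a - 2 * b : ℤ) + Real.sqrt n * Complex.I) / ((2 * b : ℤ) : ℂ) := by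
  exact_mod_cast stmt1_general (n := n) (a := a) (b := b) (c := c)
    (mod_cast hn) (mod_cast hb) (mod_cast hα)
end

section
/- Let n be a square-free positive integer. Then Q*(√-n) contains a purely imaginary element (an element with real part 0) if and only if n is even; moreover, when n is even, the set of purely imaginary elements of Q*(√-n) is finite with exactly 2·d(n/2) elements, where d(m) denotes the number of positive divisors of m. -/
open Complex

/-!
The real part of `(a + √n·i)/c` is `a/c`, so the purely imaginary elements of `Q*(√-n)` are the
numbers `√n·i/c` with `c` an even divisor of `n` in `ℤ`, and distinct `c` give distinct elements.
Even divisors exist exactly when `n` is even, and then `c = 2k` with `k` running over the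
`2·d(n/2)` positive and negative divisors of `n/2`.
-/

theorem card_int_divisors (z : ℤ) : z.divisors.card = 2 * z.natAbs.divisors.card := by
  rw [Int.divisors, Finset.card_disjUnion, Finset.card_map, Finset.card_map, two_mul]

theorem filter_dvd_int_divisors_mul {a : ℤ} (ha : a ≠ 0) (z : ℤ) :
    (a * z).divisors.filter (a ∣ ·) = z.divisors.image (a * ·) := by
  ext c
  simp only [Finset.mem_filter, Int.mem_divisors, Finset.mem_image]
  constructor
  · rintro ⟨⟨hdvd, hne⟩, k, rfl⟩
    exact ⟨k, ⟨(mul_dvd_mul_iff_left ha).1 hdvd, right_ne_zero_of_mul hne⟩, rfl⟩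
  · rintro ⟨k, ⟨hdvd, hne⟩, rfl⟩
    exact ⟨⟨mul_dvd_mul_left a hdvd, mul_ne_zero ha hne⟩, dvd_mul_right a k⟩

theorem card_filter_dvd_int_divisors_mul {a : ℤ} (ha : a ≠ 0) (z : ℤ) :
    ((a * z).divisors.filter (a ∣ ·)).card = 2 * z.natAbs.divisors.card := by
  rw [filter_dvd_int_divisors_mul ha, Finset.card_image_of_injective _ (mul_right_injective₀ ha),
    card_int_divisors]

theorem div_intCast_injective {K : Type*} [DivisionRing K] [CharZero K] {x : K} (hx : x ≠ 0) :
    Function.Injective fun c : ℤ ↦ x / (c : K) := by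
  simp only [div_eq_mul_inv]
  exact (mul_right_injective₀ hx).comp (inv_injective.comp Int.cast_injective)

theorem Qstar_re_eq_zero_eq_image (n : ℕ) :
    {z | z ∈ Qstar n ∧ z.re = 0} =
      (fun c : ℤ ↦ (Real.sqrt n * I : ℂ) / c) '' {c | c ≠ 0 ∧ 2 ∣ c ∧ c ∣ (n : ℤ)} := by
  ext z
  constructor
  · rintro ⟨⟨a, c, hc, heven, hdvd, rfl⟩, hre⟩
    obtain rfl : a = 0 := by simpa [hc] using hre
    exact ⟨c, ⟨hc, heven, by simpa using hdvd⟩, by simp⟩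
  · rintro ⟨c, ⟨hc, heven, hdvd⟩, rfl⟩
    exact ⟨⟨0, c, hc, heven, by simpa using hdvd, by simp⟩, by simp⟩

theorem exists_mem_Qstar_re_eq_zero_iff (n : ℕ) : (∃ z ∈ Qstar n, z.re = 0) ↔ Even n := by
  calc (∃ z ∈ Qstar n, z.re = 0)
    _ ↔ {z | z ∈ Qstar n ∧ z.re = 0}.Nonempty := Iff.rfl
    _ ↔ {c : ℤ | c ≠ 0 ∧ 2 ∣ c ∧ c ∣ (n : ℤ)}.Nonempty := by
      rw [Qstar_re_eq_zero_eq_image, Set.image_nonempty]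
    _ ↔ (2 : ℤ) ∣ n :=
      ⟨fun ⟨_, _, heven, hdvd⟩ ↦ heven.trans hdvd, fun h ↦ ⟨2, two_ne_zero, dvd_rfl, h⟩⟩
    _ ↔ Even n := by rw [even_iff_two_dvd]; norm_cast

theorem Qstar_re_eq_zero_eq_image_divisors {n : ℕ} (hn : n ≠ 0) :
    {z | z ∈ Qstar n ∧ z.re = 0} =
      (fun c : ℤ ↦ (Real.sqrt n * I : ℂ) / c) '' ((n : ℤ).divisors.filter (2 ∣ ·)) := by
  have hn' : (n : ℤ) ≠ 0 := Nat.cast_ne_zero.2 hn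
  rw [Qstar_re_eq_zero_eq_image]
  congr 1
  ext c
  simp only [Set.mem_ofPred_eq, Finset.mem_coe, Finset.mem_filter, Int.mem_divisors]
  exact ⟨fun ⟨_, heven, hdvd⟩ ↦ ⟨⟨hdvd, hn'⟩, heven⟩,
    fun ⟨⟨hdvd, _⟩, heven⟩ ↦ ⟨ne_zero_of_dvd_ne_zero hn' hdvd, heven, hdvd⟩⟩

theorem finite_Qstar_re_eq_zero {n : ℕ} (hn : n ≠ 0) :
    {z | z ∈ Qstar n ∧ z.re = 0}.Finite := by
  rw [Qstar_re_eq_zero_eq_image_divisors hn]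
  exact (Finset.finite_toSet _).image _

theorem ncard_Qstar_re_eq_zero {n : ℕ} (hn : n ≠ 0) :
    {z | z ∈ Qstar n ∧ z.re = 0}.ncard = ((n : ℤ).divisors.filter (2 ∣ ·)).card := by
  have hsqrt : (Real.sqrt n * I : ℂ) ≠ 0 := by simp [hn]
  rw [Qstar_re_eq_zero_eq_image_divisors hn, (div_intCast_injective hsqrt).injOn.ncard_image,
    Set.ncard_coe_finset]

theorem stmt4_general (n : ℕ) (hn : 0 < n) :
    ((∃ z ∈ Qstar n, z.re = 0) ↔ Even n) ∧
    (Even n → ({z | z ∈ Qstar n ∧ z.re = 0}).Finite ∧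
      ({z | z ∈ Qstar n ∧ z.re = 0}).ncard = 2 * (n / 2).divisors.card) := by
  refine ⟨exists_mem_Qstar_re_eq_zero_iff n, fun heven ↦
    ⟨finite_Qstar_re_eq_zero hn.ne', ?_⟩⟩
  obtain ⟨m, rfl⟩ := even_iff_two_dvd.1 heven
  calc {z | z ∈ Qstar (2 * m) ∧ z.re = 0}.ncard
    _ = (((2 * m : ℕ) : ℤ).divisors.filter (2 ∣ ·)).card := ncard_Qstar_re_eq_zero hn.ne'
    _ = 2 * m.divisors.card := by
      rw [Nat.cast_mul, Nat.cast_ofNat, card_filter_dvd_int_divisors_mul two_ne_zero,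
        Int.natAbs_natCast]
    _ = 2 * (2 * m / 2).divisors.card := by rw [Nat.mul_div_cancel_left m two_pos]

theorem stmt4 (n : ℕ) (hn : 0 < n) (hsf : Squarefree n) :
    ((∃ z ∈ Qstar n, z.re = 0) ↔ Even n) ∧
    (Even n → ({z | z ∈ Qstar n ∧ z.re = 0}).Finite ∧
      ({z | z ∈ Qstar n ∧ z.re = 0}).ncard = 2 * (n / 2).divisors.card) :=
  stmt4_general n hn
end

section
/- Let n be a square-free positive integer and α ∈ Q*(√-n). If α is totally positive or purely imaginary (i.e. Re(α) ≥ 0), then y(α), y²(α), and y³(α) are all totally negative, where y(z) = -1/(2(z+1)). -/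
open Complex

/-!
The maps `y`, `y²`, `y³` are `-1/(2(z+1))`, `-1/2 - 1/(2(2z+1))` and `-1 - 1/(2z)`, with poles
`-1`, `-1/2` and `0`. Inversion preserves the sign of the real part, so each of them takes values
with negative real part to the right of its pole. Only for `y³` does the pole lie on `Re z = 0`;
on that line the constant `-1` keeps the real part negative, and `0 ∉ Q*(√-n)` because the
elements of `Q*(√-n)` have nonzero imaginary part.
-/

section RightHalfPlane

variable {z : ℂ}

theorem inv_re_nonneg (hz : 0 ≤ z.re) : 0 ≤ z⁻¹.re := by
  rw [inv_re]
  exact div_nonneg hz (normSq_nonneg z)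

theorem inv_re_pos (hz : 0 < z.re) : 0 < z⁻¹.re := by
  rw [inv_re]
  exact div_pos hz (normSq_pos.mpr (ne_zero_of_re_pos hz))

theorem heckeY_eq_neg_inv (z : ℂ) : heckeY z = -(2 * (z + 1))⁻¹ := by
  rw [heckeY, neg_div, one_div]

theorem heckeY_heckeY_eq (hz₁ : z + 1 ≠ 0) (hz₂ : 2 * z + 1 ≠ 0) :
    heckeY (heckeY z) = -1 / 2 - (2 * (2 * z + 1))⁻¹ := by
  have add_one : heckeY z + 1 = (2 * z + 1) / (2 * (z + 1)) := by
    rw [heckeY_eq_neg_inv]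
    field_simp
    ring
  rw [heckeY, add_one]
  field_simp
  ring

theorem heckeY_heckeY_heckeY_eq (hz₀ : z ≠ 0) (hz₁ : z + 1 ≠ 0) (hz₂ : 2 * z + 1 ≠ 0) :
    heckeY (heckeY (heckeY z)) = -1 - (2 * z)⁻¹ := by
  have add_one : heckeY (heckeY z) + 1 = z / (2 * z + 1) := by
    rw [heckeY_heckeY_eq hz₁ hz₂]
    field_simp
    ring
  rw [heckeY, add_one]
  field_simp
  ring

theorem add_one_re_pos (hz : -1 < z.re) : 0 < (z + 1).re := by
  rw [add_re, one_re]
  linarith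

theorem two_mul_add_one_re_pos (hz : -1 / 2 < z.re) : 0 < (2 * z + 1).re := by
  simp only [add_re, mul_re, re_ofNat, im_ofNat, zero_mul, sub_zero, one_re]
  linarith

theorem heckeY_re_neg (hz : -1 < z.re) : (heckeY z).re < 0 := by
  have inv_pos : 0 < (2 * (z + 1))⁻¹.re := inv_re_pos (by simpa using add_one_re_pos hz)
  rw [heckeY_eq_neg_inv, neg_re]
  exact neg_neg_of_pos inv_pos

theorem heckeY_heckeY_re_neg (hz : -1 / 2 < z.re) : (heckeY (heckeY z)).re < 0 := by
  have hz₁ : z + 1 ≠ 0 := ne_zero_of_re_pos (add_one_re_pos (by linarith))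
  have re_pos : 0 < (2 * z + 1).re := two_mul_add_one_re_pos hz
  have inv_pos : 0 < (2 * (2 * z + 1))⁻¹.re := inv_re_pos (by simpa using re_pos)
  have neg_half_re : (-1 / 2 : ℂ).re = -1 / 2 := by simp
  rw [heckeY_heckeY_eq hz₁ (ne_zero_of_re_pos re_pos), sub_re, neg_half_re]
  linarith

theorem heckeY_heckeY_heckeY_re_neg (hz₀ : z ≠ 0) (hz : 0 ≤ z.re) :
    (heckeY (heckeY (heckeY z))).re < 0 := by
  have hz₁ : z + 1 ≠ 0 := ne_zero_of_re_pos (add_one_re_pos (by linarith))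
  have hz₂ : 2 * z + 1 ≠ 0 := ne_zero_of_re_pos (two_mul_add_one_re_pos (by linarith))
  have inv_nonneg : 0 ≤ (2 * z)⁻¹.re := inv_re_nonneg (by simpa using hz)
  rw [heckeY_heckeY_heckeY_eq hz₀ hz₁ hz₂, sub_re, neg_re, one_re]
  linarith

end RightHalfPlane

theorem im_ne_zero_of_mem_Qstar {n : ℕ} (hn : 0 < n) {z : ℂ} (hz : z ∈ Qstar n) : z.im ≠ 0 := by
  obtain ⟨a, c, hc, -, -, rfl⟩ := hz
  have im_eq : (((a : ℂ) + Real.sqrt n * I) / (c : ℂ)).im = Real.sqrt n / c := by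
    rw [← ofReal_intCast c, div_ofReal_im]
    simp
  rw [im_eq]
  exact div_ne_zero (Real.sqrt_ne_zero'.mpr (Nat.cast_pos.mpr hn)) (Int.cast_ne_zero.mpr hc)

theorem stmt6_general (α : ℂ) (hα : α ≠ 0) (h : 0 ≤ α.re) :
    (heckeY α).re < 0 ∧ (heckeY (heckeY α)).re < 0 ∧
      (heckeY (heckeY (heckeY α))).re < 0 :=
  ⟨heckeY_re_neg (by linarith), heckeY_heckeY_re_neg (by linarith),
    heckeY_heckeY_heckeY_re_neg hα h⟩

theorem stmt6 (n : ℕ) (hn : 0 < n) (hsf : Squarefree n)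
    (α : ℂ) (hα : α ∈ Qstar n) (h : 0 ≤ α.re) :
    (heckeY α).re < 0 ∧ (heckeY (heckeY α)).re < 0 ∧
      (heckeY (heckeY (heckeY α))).re < 0 :=
  stmt6_general α (ne_of_apply_ne im (im_ne_zero_of_mem_Qstar hn hα)) h
end

section
/- Let n be a square-free positive integer and let α = (a + √n·i)/c ∈ Q*(√-n), with b = (a²+n)/c. Then α, y(α), y²(α), and y³(α) are all totally negative if and only if α is totally negative and the inequalities |a| < |c|, |a| < 2|b|, and 3|a| < 2|b| + |c| hold, where y(z) = -1/(2(z+1)). -/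
open Complex

/-!
Each of `y(z)`, `y²(z)`, `y³(z)` is minus a quotient of two linear forms in `z`, and `re (p / q)`
has the sign of `re (p * conj q)`. Hence its total negativity is a linear inequality between `1`,
`re z` and `|z|²`. At `z = (a + √d·i) / c` the last two are `a / c` and `b / c = |b| / |c|`, and
multiplying by `|c|` clears the denominators whatever the sign of `c`.
-/

open scoped ComplexConjugate

theorem re_div_pos_iff {p q : ℂ} (hq : q ≠ 0) : 0 < (p / q).re ↔ 0 < (p * conj q).re := by
  rw [div_eq_mul_inv, Complex.inv_def, ← mul_assoc, re_mul_ofReal,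
    mul_pos_iff_of_pos_right (inv_pos.2 (normSq_pos.2 hq))]

theorem re_neg_div_neg_iff {p q : ℂ} (hq : q ≠ 0) : (-(p / q)).re < 0 ↔ 0 < (p * conj q).re := by
  rw [neg_re, neg_lt_zero, re_div_pos_iff hq]

section Iterates

variable {z : ℂ}

theorem heckeY_heckeY (h₁ : z + 1 ≠ 0) : heckeY (heckeY z) = -((z + 1) / (2 * z + 1)) := by
  have hadd : heckeY z + 1 = (2 * z + 1) / (2 * (z + 1)) := by
    rw [heckeY]
    field_simp
    ring
  rw [heckeY, hadd]
  field_simp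

theorem heckeY_heckeY_heckeY (h₁ : z + 1 ≠ 0) (h₂ : 2 * z + 1 ≠ 0) :
    heckeY (heckeY (heckeY z)) = -((2 * z + 1) / (2 * z)) := by
  have hadd : heckeY (heckeY z) + 1 = z / (2 * z + 1) := by
    rw [heckeY_heckeY h₁, neg_add_eq_sub, one_sub_div h₂]
    ring
  rw [heckeY, hadd]
  field_simp

theorem re_heckeY_neg_iff (h₁ : z + 1 ≠ 0) : (heckeY z).re < 0 ↔ -1 < z.re := by
  rw [heckeY, neg_div, re_neg_div_neg_iff (mul_ne_zero two_ne_zero h₁)]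
  simp [neg_lt_iff_pos_add]

theorem re_heckeY_heckeY_neg_iff (h₁ : z + 1 ≠ 0) (h₂ : 2 * z + 1 ≠ 0) :
    (heckeY (heckeY z)).re < 0 ↔ 0 < 2 * normSq z + 3 * z.re + 1 := by
  have hre : ((z + 1) * conj (2 * z + 1)).re = 2 * normSq z + 3 * z.re + 1 := by
    simp only [map_add, map_mul, map_one, conj_ofNat, normSq_apply, mul_re, mul_im, add_re, add_im,
      conj_re, conj_im, one_re, one_im, re_ofNat, im_ofNat]
    ring
  rw [heckeY_heckeY h₁, re_neg_div_neg_iff h₂, hre]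

theorem re_heckeY_heckeY_heckeY_neg_iff (h₀ : z ≠ 0) (h₁ : z + 1 ≠ 0) (h₂ : 2 * z + 1 ≠ 0) :
    (heckeY (heckeY (heckeY z))).re < 0 ↔ 0 < 2 * normSq z + z.re := by
  have hre : ((2 * z + 1) * conj (2 * z)).re = 2 * (2 * normSq z + z.re) := by
    simp only [map_mul, conj_ofNat, normSq_apply, mul_re, mul_im, add_re, add_im, conj_re, conj_im,
      one_re, one_im, re_ofNat, im_ofNat]
    ring
  rw [heckeY_heckeY_heckeY h₁ h₂, re_neg_div_neg_iff (mul_ne_zero two_ne_zero h₀), hre,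
    mul_pos_iff_of_pos_left two_pos]

theorem re_heckeY_iterates_neg_iff (hz : z.im ≠ 0) :
    (z.re < 0 ∧ (heckeY z).re < 0 ∧ (heckeY (heckeY z)).re < 0 ∧
        (heckeY (heckeY (heckeY z))).re < 0) ↔
      (z.re < 0 ∧ |z.re| < 1 ∧ |z.re| < 2 * normSq z ∧ 3 * |z.re| < 2 * normSq z + 1) := by
  have h₀ : z ≠ 0 := fun h => hz (by simp [h])
  have h₁ : z + 1 ≠ 0 := fun h => hz (by simpa using congrArg im h)
  have h₂ : 2 * z + 1 ≠ 0 := fun h => hz (by simpa using congrArg im h)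
  rw [re_heckeY_neg_iff h₁, re_heckeY_heckeY_neg_iff h₁ h₂,
    re_heckeY_heckeY_heckeY_neg_iff h₀ h₁ h₂]
  refine and_congr_right fun hneg => ?_
  rw [abs_of_neg hneg]
  constructor <;> rintro ⟨_, _, _⟩ <;> refine ⟨?_, ?_, ?_⟩ <;> linarith

end Iterates

theorem normSq_add_sqrt_mul_I_div {a b c d : ℝ} (hc : c ≠ 0) (hd : 0 ≤ d)
    (hbc : b * c = a ^ 2 + d) :
    normSq (((a : ℂ) + √d * I) / c) = b / c := by
  rw [normSq_div, normSq_add_mul_I, normSq_ofReal, Real.sq_sqrt hd, ← hbc,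
    mul_div_mul_right _ _ hc]

theorem stmt7_general {a b c d : ℝ} (hd : 0 < d) (hbc : b * c = a ^ 2 + d)
    {α : ℂ} (hα : α = ((a : ℂ) + √d * I) / (c : ℂ)) :
    (α.re < 0 ∧ (heckeY α).re < 0 ∧ (heckeY (heckeY α)).re < 0 ∧
        (heckeY (heckeY (heckeY α))).re < 0) ↔
      (α.re < 0 ∧ |a| < |c| ∧ |a| < 2 * |b| ∧ 3 * |a| < 2 * |b| + |c|) := by
  have hc : c ≠ 0 := right_ne_zero_of_mul (hbc ▸ by positivity : b * c ≠ 0)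
  have hre : |α.re| = |a| / |c| := by simp [hα, abs_div]
  have him : α.im = √d / c := by simp [hα]
  have him_ne : α.im ≠ 0 := him ▸ div_ne_zero (Real.sqrt_pos.2 hd).ne' hc
  have hnormSq : normSq α = |b| / |c| := by
    rw [← abs_of_nonneg (normSq_nonneg α), hα, normSq_add_sqrt_mul_I_div hc hd.le hbc, abs_div]
  rw [re_heckeY_iterates_neg_iff him_ne, hre, hnormSq]
  field_simp

theorem stmt7 (n : ℕ) (hn : 0 < n) (hsf : Squarefree n)
    (a b c : ℤ) (hc : c ≠ 0) (hc2 : (2 : ℤ) ∣ c)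
    (hb : b * c = a ^ 2 + (n : ℤ))
    (α : ℂ) (hα : α = ((a : ℂ) + Real.sqrt n * Complex.I) / (c : ℂ)) :
    (α.re < 0 ∧ (heckeY α).re < 0 ∧ (heckeY (heckeY α)).re < 0 ∧
        (heckeY (heckeY (heckeY α))).re < 0) ↔
      (α.re < 0 ∧ |a| < |c| ∧ |a| < 2 * |b| ∧ 3 * |a| < 2 * |b| + |c|) := by
  exact_mod_cast stmt7_general (a := a) (b := b) (c := c) (d := n) (α := α)
    (by exact_mod_cast hn) (by exact_mod_cast hb) (by exact_mod_cast hα)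
end

section
/- Let n be an odd square-free positive integer and let (a, B, C) ∈ S_{a>0}(-n), with C = 2C'. If B ≤ n or C' ≤ n, then a ≤ n. -/
open Complex

/-! Put `x = 2B` and `y = C`, or the other way round, so that `x * y = 2 * (a ^ 2 + n)`. The
condition `3a < x + y` then gives `(x - a) * (2a - x) + x ≤ 2n`. If `a < x < 2a`, both factors are
positive integers with sum `a`, so their product is at least `a - 1`, and `a ≤ n` follows; otherwise
`2a ≤ x`, and a bound `x ≤ 2n` is enough. -/

section OrderedRing

variable {R : Type*} [CommRing R] [PartialOrder R] [IsOrderedRing R]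

theorem add_le_mul_add_one {u v : R} (hu : 1 ≤ u) (hv : 1 ≤ v) : u + v ≤ u * v + 1 := by
  have hprod : 0 ≤ (u - 1) * (v - 1) := mul_nonneg (sub_nonneg.2 hu) (sub_nonneg.2 hv)
  linear_combination hprod

theorem sub_mul_two_mul_sub_add_le {a n x y : R} (hxy : x * y = 2 * (a ^ 2 + n)) (hx : 0 ≤ x)
    (hsum : 3 * a + 1 ≤ x + y) : (x - a) * (2 * a - x) + x ≤ 2 * n :=
  calc
    (x - a) * (2 * a - x) + x = x * (3 * a + 1) - x ^ 2 - 2 * a ^ 2 := by ring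
    _ ≤ x * (x + y) - x ^ 2 - 2 * a ^ 2 := by gcongr
    _ = 2 * n := by linear_combination hxy

end OrderedRing

section Int

variable {a n x y : ℤ}

theorem le_of_mul_eq_two_mul_sq_add_of_lt_two_mul (hxy : x * y = 2 * (a ^ 2 + n))
    (hsum : 3 * a < x + y) (hax : a < x) (hxa : x < 2 * a) : a ≤ n := by
  have hprod : (x - a) + (2 * a - x) ≤ (x - a) * (2 * a - x) + 1 :=
    add_le_mul_add_one (by omega) (by omega)
  have hbound : (x - a) * (2 * a - x) + x ≤ 2 * n :=
    sub_mul_two_mul_sub_add_le hxy (by omega) hsum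
  linarith

theorem le_of_mul_eq_two_mul_sq_add (hxy : x * y = 2 * (a ^ 2 + n)) (hsum : 3 * a < x + y)
    (hax : a < x) (hxn : x ≤ 2 * n) : a ≤ n := by
  rcases lt_or_ge x (2 * a) with hxa | hxa
  · exact le_of_mul_eq_two_mul_sq_add_of_lt_two_mul hxy hsum hax hxa
  · linarith

end Int

theorem stmt9_general {n a B C : ℤ} (hBC : B * C = a ^ 2 + n) (hsum : 3 * a < 2 * B + C)
    (h : a < 2 * B ∧ B ≤ n ∨ a < C ∧ C ≤ 2 * n) : a ≤ n := by
  rcases h with ⟨haB, hBn⟩ | ⟨haC, hCn⟩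
  · exact le_of_mul_eq_two_mul_sq_add (x := 2 * B) (y := C) (by linear_combination 2 * hBC)
      hsum haB (by linarith)
  · exact le_of_mul_eq_two_mul_sq_add (x := C) (y := 2 * B) (by linear_combination 2 * hBC)
      (by linarith) haC hCn

theorem stmt9 (n : ℕ) (hn : 0 < n) (hodd : Odd n) (hsf : Squarefree n)
    (a B C C' : ℕ) (ha : 0 < a) (hB : 0 < B) (hC : 0 < C)
    (hCC' : C = 2 * C') (hBC : B * C = a ^ 2 + n)
    (h1 : a < 2 * B) (h2 : a < C) (h3 : 3 * a < 2 * B + C)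
    (h : B ≤ n ∨ C' ≤ n) :
    a ≤ n := by
  exact mod_cast stmt9_general (n := n) (a := a) (B := B) (C := C) (mod_cast hBC) (mod_cast h3)
    (by omega)
end

section
/- Let n be an even square-free positive integer and let (a, B, C) ∈ S_{a>0}(-n), with C = 2C'. If B ≤ n/2 or C' ≤ n/2, then a ≤ n/2. -/
open Complex

/-!
If `s ≤ x` and `s ≤ y`, then `0 ≤ (x - s) * (y - s)`, that is `s * (x + y - s) ≤ x * y`. Take
`x = 2 * B`, `y = C` and `s = a + k`, where `k ≥ 0` is at most each of the gaps `2 * B - a`, `C - a`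
and `2 * B + C - 3 * a`. Then `x + y - s ≥ 2 * a`, so `(a + k) * (2 * a) ≤ 2 * (a ^ 2 + n)`, which
says `k * a ≤ n`. When `n` and `C` are even, so is `a`; the three positive gaps are then even, and
`k = 2` works.
-/

theorem mul_le_mul_of_add_le_add {R : Type*} [CommSemiring R] [PartialOrder R] [IsOrderedRing R]
    [AddLeftReflectLE R] [ExistsAddOfLE R] {s t x y : R} (hs : 0 ≤ s) (hsx : s ≤ x) (hsy : s ≤ y)
    (hst : s + t ≤ x + y) : s * t ≤ x * y := by
  refine le_of_add_le_add_left (a := s * s) ?_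
  calc s * s + s * t = s * (s + t) := (mul_add s s t).symm
    _ ≤ s * (x + y) := mul_le_mul_of_nonneg_left hst hs
    _ = s * y + x * s := by ring
    _ ≤ s * s + x * y := mul_add_mul_le_mul_add_mul hsx hsy

theorem mul_le_of_mul_eq_sq_add {R : Type*} [CommRing R] [LinearOrder R] [IsStrictOrderedRing R]
    {k a n B C : R} (hBC : B * C = a ^ 2 + n) (hak : 0 ≤ a + k) (hB : a + k ≤ 2 * B)
    (hC : a + k ≤ C) (hsum : 3 * a + k ≤ 2 * B + C) : k * a ≤ n := by
  have hmul : (a + k) * (2 * a) ≤ 2 * B * C :=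
    mul_le_mul_of_add_le_add hak hB hC (by linarith)
  have htwo : 2 * (k * a) ≤ 2 * n := by linarith
  exact le_of_mul_le_mul_left htwo two_pos

theorem stmt10_general {n a B C : ℤ} (hn : Even n) (ha : 0 ≤ a) (hC : Even C)
    (hBC : B * C = a ^ 2 + n) (h1 : a < 2 * B) (h2 : a < C) (h3 : 3 * a < 2 * B + C) :
    a ≤ n / 2 := by
  have hsq_even : Even (a ^ 2) := (Int.even_add.1 (hBC ▸ hC.mul_left B)).2 hn
  have ha_even : Even a := (Int.even_pow.1 hsq_even).1
  have hB_even : Even (2 * B) := even_two_mul B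
  have htwo : 2 * a ≤ n :=
    mul_le_of_mul_eq_sq_add hBC (by positivity)
      ((Int.add_two_le_iff_lt_of_even_sub (hB_even.sub ha_even)).2 h1)
      ((Int.add_two_le_iff_lt_of_even_sub (hC.sub ha_even)).2 h2)
      ((Int.add_two_le_iff_lt_of_even_sub ((hB_even.add hC).sub (ha_even.mul_left 3))).2 h3)
  lia

theorem stmt10 (n : ℕ) (hn : 0 < n) (heven : Even n) (hsf : Squarefree n)
    (a B C C' : ℕ) (ha : 0 < a) (hB : 0 < B) (hC : 0 < C)
    (hCC' : C = 2 * C') (hBC : B * C = a ^ 2 + n)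
    (h1 : a < 2 * B) (h2 : a < C) (h3 : 3 * a < 2 * B + C)
    (h : B ≤ n / 2 ∨ C' ≤ n / 2) :
    a ≤ n / 2 := by
  have hC_even : Even C := hCC' ▸ even_two_mul C'
  exact_mod_cast stmt10_general (n := n) (a := a) (B := B) (C := C) (mod_cast heven)
    (mod_cast ha.le) (mod_cast hC_even) (mod_cast hBC) (mod_cast h1) (mod_cast h2) (mod_cast h3)
end

section
/- Let n be an odd square-free positive integer. Then every triple (a, B, C) ∈ S_{a>0}(-n) satisfies a ≤ n. -/
open Complex

/-!
Shift the factors by `a`: with `p = 2 * B - a` and `q = C - a` the equation `B * C = a ^ 2 + n`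
becomes `p * q + a * (p + q - a) = 2 * n`, and the inequalities say `1 ≤ p`, `1 ≤ q` and
`a + 1 ≤ p + q`. Hence `p * q ≥ p + q - 1 ≥ a` and `a * (p + q - a) ≥ a`, so `2 * n ≥ 2 * a`.
-/

theorem mul_add_mul_add_sub_eq_two_mul {R : Type*} [CommRing R] {a n p q : R}
    (h : (p + a) * (q + a) = 2 * (a ^ 2 + n)) : p * q + a * (p + q - a) = 2 * n := by
  linear_combination h

theorem le_of_add_mul_add_eq_two_mul {R : Type*} [CommRing R] [LinearOrder R]
    [IsStrictOrderedRing R] {a n p q : R} (ha : 0 ≤ a) (hp : 1 ≤ p) (hq : 1 ≤ q)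
    (hpq : a + 1 ≤ p + q) (h : (p + a) * (q + a) = 2 * (a ^ 2 + n)) : a ≤ n := by
  have h_add : p + q ≤ p * q + 1 := by simpa using mul_add_mul_le_mul_add_mul' hp hq
  have h_mul : a ≤ p * q := by linarith
  have h_shift : a ≤ a * (p + q - a) := le_mul_of_one_le_right ha (by linarith)
  have h_double : 2 * a ≤ 2 * n := calc
    2 * a = a + a := two_mul a
    _ ≤ p * q + a * (p + q - a) := add_le_add h_mul h_shift
    _ = 2 * n := mul_add_mul_add_sub_eq_two_mul h
  exact le_of_mul_le_mul_left h_double two_pos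

theorem stmt11_general {a n B C : ℤ} (ha : 0 ≤ a) (hBC : B * C = a ^ 2 + n)
    (h1 : a < 2 * B) (h2 : a < C) (h3 : 3 * a < 2 * B + C) : a ≤ n := by
  have h_shift : (2 * B - a + a) * (C - a + a) = 2 * (a ^ 2 + n) := by
    linear_combination 2 * hBC
  exact le_of_add_mul_add_eq_two_mul ha (by lia) (by lia) (by lia) h_shift

theorem stmt11 (n : ℕ) (hn : 0 < n) (hodd : Odd n) (hsf : Squarefree n)
    (a B C : ℕ) (ha : 0 < a) (hB : 0 < B) (hC : 0 < C) (hCe : 2 ∣ C)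
    (hBC : B * C = a ^ 2 + n)
    (h1 : a < 2 * B) (h2 : a < C) (h3 : 3 * a < 2 * B + C) :
    a ≤ n := by
  zify at ha hBC h1 h2 h3 ⊢
  exact stmt11_general ha.le hBC h1 h2 h3
end

section
/- Let n be an even square-free positive integer. Then every triple (a, B, C) ∈ S_{a>0}(-n) satisfies a ≤ n/2. -/
open Complex

/-!
Write `p = 2B` and `q = C`, so that `pq = 2(a² + n)`. Since `n` and `C` are even, so are `a`, `p`
and `q`, and the three strict inequalities improve by `2`: `p, q ≥ a + 2` and `p + q ≥ 3a + 2`.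
On this region `pq` is smallest at the corner `{p, q} = {a + 2, 2a}`, hence
`2(a² + n) ≥ 2a(a + 2)`, that is, `n ≥ 2a`.
-/

theorem mul_le_mul_of_le_of_le_of_add_le_add {R : Type*} [CommSemiring R] [PartialOrder R]
    [IsStrictOrderedRing R] [ExistsAddOfLE R] {s t p q : R} (hs : 0 ≤ s) (hp : s ≤ p) (hq : s ≤ q)
    (h : s + t ≤ p + q) : s * t ≤ p * q := by
  refine le_of_add_le_add_left (a := s * s) ?_
  calc
    s * s + s * t = s * (s + t) := (mul_add s s t).symm
    _ ≤ s * (p + q) := mul_le_mul_of_nonneg_left h hs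
    _ = s * q + p * s := by ring
    _ ≤ s * s + p * q := mul_add_mul_le_mul_add_mul hp hq

theorem add_mul_two_mul_le_mul_of_dvd {d a p q : ℕ} (ha : d ∣ a) (hp : d ∣ p) (hq : d ∣ q)
    (hap : a < p) (haq : a < q) (h : 3 * a < p + q) : (a + d) * (2 * a) ≤ p * q := by
  have add_le_of_lt {x y : ℕ} (hx : d ∣ x) (hy : d ∣ y) (hxy : x < y) : x + d ≤ y :=
    (hx.modEq_zero_nat.trans hy.zero_modEq_nat).add_le_of_lt hxy
  have hsum : 3 * a + d ≤ p + q := add_le_of_lt (ha.mul_left 3) (dvd_add hp hq) h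
  exact mul_le_mul_of_le_of_le_of_add_le_add (Nat.zero_le _) (add_le_of_lt ha hp hap)
    (add_le_of_lt ha hq haq) (by linarith)

theorem stmt12_general {n a B C : ℕ} (hn : Even n) (hC : 2 ∣ C) (hBC : B * C = a ^ 2 + n)
    (haB : a < 2 * B) (haC : a < C) (haBC : 3 * a < 2 * B + C) : a ≤ n / 2 := by
  have ha : 2 ∣ a :=
    Nat.prime_two.dvd_of_dvd_pow ((Nat.dvd_add_left hn.two_dvd).1 (hBC ▸ hC.mul_left B))
  have hprod : (a + 2) * (2 * a) ≤ 2 * B * C :=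
    add_mul_two_mul_le_mul_of_dvd ha (dvd_mul_right 2 B) hC haB haC haBC
  rw [Nat.le_div_iff_mul_le two_pos]
  linarith

theorem stmt12 (n : ℕ) (hn : 0 < n) (heven : Even n) (hsf : Squarefree n)
    (a B C : ℕ) (ha : 0 < a) (hB : 0 < B) (hC : 0 < C) (hCe : 2 ∣ C)
    (hBC : B * C = a ^ 2 + n)
    (h1 : a < 2 * B) (h2 : a < C) (h3 : 3 * a < 2 * B + C) :
    a ≤ n / 2 := by
  exact stmt12_general heven hCe hBC h1 h2 h3
end

section
/- Let i and n be positive integers and let C be a positive even integer dividing i² + n. Then at most one of the following three conditions holds: (i) 2(i²+n)/C ≤ i; (ii) C ≤ i; (iii) 2(i²+n)/C + C ≤ 3i. -/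
open Complex

/-! Put `B = 2(i² + n)/C`, so that `B C > 2i²` and `B, C > 0`. If `0 ≤ x ≤ i` and `x + y ≤ 3i`, then
`x y ≤ x (3i - x) = 2i² - (i - x)(2i - x) ≤ 2i²`; hence neither `B ≤ i` nor `C ≤ i` is compatible
with `B + C ≤ 3i`. Finally, `B ≤ i` and `C ≤ i` together would imply `B + C ≤ 2i ≤ 3i`. -/

lemma mul_le_two_mul_sq_of_add_le_three_mul {R : Type*} [CommRing R] [PartialOrder R]
    [IsOrderedRing R] {t x y : R} (hx : 0 ≤ x) (hxt : x ≤ t) (hxy : x + y ≤ 3 * t) :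
    x * y ≤ 2 * t ^ 2 := by
  have hgap : 0 ≤ t - x := sub_nonneg.2 hxt
  calc
    x * y ≤ x * (3 * t - x) := mul_le_mul_of_nonneg_left (le_sub_iff_add_le'.2 hxy) hx
    _ = 2 * t ^ 2 - (t - x) * (t + (t - x)) := by ring
    _ ≤ 2 * t ^ 2 := sub_le_self _ (mul_nonneg hgap (add_nonneg (hx.trans hxt) hgap))

theorem stmt19_general {K : Type*} [Field K] [LinearOrder K] [IsStrictOrderedRing K]
    (i n C : K) (hn : 0 < n) (hC : 0 < C) :
    ¬(2 * (i ^ 2 + n) / C ≤ i ∧ C ≤ i) ∧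
    ¬(2 * (i ^ 2 + n) / C ≤ i ∧ 2 * (i ^ 2 + n) / C + C ≤ 3 * i) ∧
    ¬(C ≤ i ∧ 2 * (i ^ 2 + n) / C + C ≤ 3 * i) := by
  have hB : 0 < 2 * (i ^ 2 + n) / C := by positivity
  have hBC : 2 * i ^ 2 < 2 * (i ^ 2 + n) / C * C := by
    rw [div_mul_cancel₀ _ hC.ne']
    linarith
  generalize 2 * (i ^ 2 + n) / C = B at hB hBC ⊢
  have not_le_of_sum_le (hsum : B + C ≤ 3 * i) : ¬B ≤ i := fun hBi ↦
    hBC.not_ge (mul_le_two_mul_sq_of_add_le_three_mul hB.le hBi hsum)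
  refine ⟨fun ⟨hBi, hCi⟩ ↦ ?_, fun ⟨hBi, hsum⟩ ↦ not_le_of_sum_le hsum hBi,
    fun ⟨hCi, hsum⟩ ↦ ?_⟩
  · exact not_le_of_sum_le (by linarith only [hB, hBi, hCi]) hBi
  · rw [mul_comm B] at hBC
    rw [add_comm] at hsum
    exact hBC.not_ge (mul_le_two_mul_sq_of_add_le_three_mul hC.le hCi hsum)

theorem stmt19 (i n C : ℕ) (hi : 0 < i) (hn : 0 < n) (hC : 0 < C)
    (hCe : 2 ∣ C) (hdvd : C ∣ i ^ 2 + n) :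
    ¬(2 * (i ^ 2 + n) / C ≤ i ∧ C ≤ i) ∧
    ¬(2 * (i ^ 2 + n) / C ≤ i ∧ 2 * (i ^ 2 + n) / C + C ≤ 3 * i) ∧
    ¬(C ≤ i ∧ 2 * (i ^ 2 + n) / C + C ≤ 3 * i) := by
  have hcast : ((2 * (i ^ 2 + n) / C : ℕ) : ℚ) = 2 * (i ^ 2 + n) / C := by
    exact_mod_cast Nat.cast_div_charZero (hdvd.mul_left 2)
  exact_mod_cast hcast ▸ stmt19_general (i : ℚ) n C (mod_cast hn) (mod_cast hC)
end
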